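/- Let P ⊆ ℝ^d be a d-dimensional simplicial reflexive polytope and F a facet of P. Then: (a) every lattice point x ∈ ∂P with ⟨u_F, x⟩ = 0 lies on a neighboring facet N(F,w) for some w ∈ 𝒱(F); (b) every vertex v ∈ H_P(F,0) is the neighboring vertex n(F,w) for some w ∈ 𝒱(F); consequently |H_P(F,0)| ≤ d. -/

import Mathlib

noncomputable section

/-- The standard inner product on `ℝ^d`. -/
def dotp {d : ℕ} (x y : Fin d → ℝ) : ℝ := ∑ i, x i * y i

/-- `x` is a point of the lattice `ℤ^d`. -/
def IsLP {d : ℕ} (x : Fin d → ℝ) : Prop := ∀ i, ∃ n : ℤ, x i = (n : ℝ)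

/-- A lattice polytope: convex hull of finitely many lattice points. -/
def IsLatticePolytope {d : ℕ} (P : Set (Fin d → ℝ)) : Prop :=
  ∃ V : Finset (Fin d → ℝ), (∀ v ∈ V, IsLP v) ∧ P = convexHull ℝ (V : Set (Fin d → ℝ))

/-- The dual polytope `P* = {x | ⟨x,y⟩ ≤ 1 ∀ y ∈ P}`. -/
def dualPolytope {d : ℕ} (P : Set (Fin d → ℝ)) : Set (Fin d → ℝ) :=
  {x | ∀ y ∈ P, dotp x y ≤ 1}

/-- `P` is a reflexive polytope: a (`d`-dimensional) lattice polytope with `0` in its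
interior whose dual is again a lattice polytope. -/
def IsReflexive {d : ℕ} (P : Set (Fin d → ℝ)) : Prop :=
  IsLatticePolytope P ∧ (0 : Fin d → ℝ) ∈ interior P ∧ IsLatticePolytope (dualPolytope P)

/-- `F` is a facet of `P` with (uniquely determined) outer normal `u`, normalized by
`⟨u, F⟩ = 1` (possible since `0` is in the interior of `P`). -/
def IsFacetNormal {d : ℕ} (P F : Set (Fin d → ℝ)) (u : Fin d → ℝ) : Prop :=
  F.Nonempty ∧ (∀ y ∈ P, dotp u y ≤ 1) ∧ F = {y ∈ P | dotp u y = 1} ∧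
    Module.finrank ℝ (vectorSpan ℝ F) = d - 1

/-- `F` is a facet of `P`. -/
def IsFacet {d : ℕ} (P F : Set (Fin d → ℝ)) : Prop := ∃ u, IsFacetNormal P F u

/-- `P` is simplicial: every facet has exactly `d` vertices. -/
def IsSimplicial {d : ℕ} (P : Set (Fin d → ℝ)) : Prop :=
  ∀ F, IsFacet P F → (Set.extremePoints ℝ F).ncard = d

/-- `F'` is the neighboring facet `N(F,w)`: a facet different from `F` containing all
vertices of `F` except `w`. -/
def NbrFacet {d : ℕ} (P F : Set (Fin d → ℝ)) (w : Fin d → ℝ) (F' : Set (Fin d → ℝ)) : Prop :=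
  IsFacet P F' ∧ F' ≠ F ∧ Set.extremePoints ℝ F \ {w} ⊆ F'

/-- `v'` is the neighboring vertex `n(F,w)`: the vertex of the neighboring facet `N(F,w)`
not contained in `F`. -/
def NbrVertex {d : ℕ} (P F : Set (Fin d → ℝ)) (w v' : Fin d → ℝ) : Prop :=
  ∃ F', NbrFacet P F w F' ∧ v' ∈ Set.extremePoints ℝ F' ∧ v' ∉ F

theorem dotp_sub_right {d : ℕ} (u x y : Fin d → ℝ) : dotp u (x - y) = dotp u x - dotp u y := by
  simp [dotp, mul_sub, Finset.sum_sub_distrib]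

/-- The linear functional `dotp u`. -/
def dotl {d : ℕ} (u : Fin d → ℝ) : (Fin d → ℝ) →ₗ[ℝ] ℝ where
  toFun := dotp u
  map_add' x y := by simp [dotp, mul_add, Finset.sum_add_distrib]
  map_smul' c x := by simp [dotp, Finset.mul_sum, mul_left_comm]

theorem dotl_apply {d : ℕ} (u x : Fin d → ℝ) : dotl u x = dotp u x := rfl

theorem dotp_comm {d : ℕ} (x y : Fin d → ℝ) : dotp x y = dotp y x := by
  simp [dotp, mul_comm]

theorem finrank_span_eq {d : ℕ} (u : Fin d → ℝ) (G : Set (Fin d → ℝ)) (hne : G.Nonempty)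
    (h : ∀ y ∈ G, dotp u y = 1) :
    Module.finrank ℝ (Submodule.span ℝ G) = Module.finrank ℝ (vectorSpan ℝ G) + 1 := by
  obtain ⟨g, hg⟩ := hne
  have hv : vectorSpan ℝ G ≤ LinearMap.ker (dotl u) := by
    rw [vectorSpan_def, Submodule.span_le]
    rintro _ ⟨a, ha, b, hb, rfl⟩
    simp [dotl_apply, dotp_sub_right, h a ha, h b hb]
  have hg0 : g ≠ 0 := by
    rintro rfl
    have := h 0 hg
    simp [dotp] at this
  have e : Submodule.span ℝ G = vectorSpan ℝ G ⊔ Submodule.span ℝ {g} := by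
    apply le_antisymm
    · rw [Submodule.span_le]
      intro y hy
      have : y = (y - g) + g := by simp
      rw [this]
      exact Submodule.add_mem_sup (vsub_mem_vectorSpan ℝ hy hg)
        (Submodule.mem_span_singleton_self g)
    · apply sup_le
      · rw [vectorSpan_def, Submodule.span_le]
        rintro _ ⟨a, ha, b, hb, rfl⟩
        exact Submodule.sub_mem _ (Submodule.subset_span ha) (Submodule.subset_span hb)
      · rw [Submodule.span_le]
        simpa using Submodule.subset_span hg
  have i : vectorSpan ℝ G ⊓ Submodule.span ℝ {g} = ⊥ := by
    rw [eq_bot_iff]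
    rintro y ⟨h1, h2⟩
    obtain ⟨c, rfl⟩ := Submodule.mem_span_singleton.1 h2
    have := hv h1
    rw [LinearMap.mem_ker, map_smul, dotl_apply, h g hg] at this
    simp at this
    simp [this]
  have := Submodule.finrank_sup_add_finrank_inf_eq (vectorSpan ℝ G) (Submodule.span ℝ {g})
  rw [i, finrank_bot, finrank_span_singleton hg0, ← e] at this
  simpa using this

theorem facet_span {d : ℕ} {P F : Set (Fin d → ℝ)} {u : Fin d → ℝ} (hF : IsFacetNormal P F u) :
    Submodule.span ℝ F = ⊤ := by
  obtain ⟨hne, hle, he, hr⟩ := hF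
  have h1 : ∀ y ∈ F, dotp u y = 1 := by
    intro y hy
    rw [he] at hy
    exact hy.2
  have hd : d ≠ 0 := by
    rintro rfl
    obtain ⟨y, hy⟩ := hne
    have := h1 y hy
    simp [dotp] at this
  apply Submodule.eq_top_of_finrank_eq
  rw [finrank_span_eq u F hne h1, hr]
  simp
  omega

theorem facet_normal_lattice {d : ℕ} {P F : Set (Fin d → ℝ)} {u : Fin d → ℝ}
    (hP : IsLatticePolytope (dualPolytope P)) (hF : IsFacetNormal P F u) : IsLP u := by
  have hsp := facet_span hF
  obtain ⟨hne, hle, he, hr⟩ := hF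
  obtain ⟨V, hV, hPV⟩ := hP
  have key : ∀ p : Fin d → ℝ, (∀ y ∈ F, dotp p y = 1) → p = u := by
    intro p hp
    have : dotl p = dotl u := by
      apply LinearMap.ext_on hsp
      intro y hy
      rw [dotl_apply, dotl_apply, hp y hy]
      rw [he] at hy
      exact hy.2.symm
    funext i
    have := LinearMap.congr_fun this (Pi.single i 1)
    simpa [dotl_apply, dotp, Pi.single_apply] using this
  have hext : u ∈ Set.extremePoints ℝ (dualPolytope P) := by
    rw [mem_extremePoints_iff_left]
    refine ⟨hle, ?_⟩
    rintro p hp q hq ⟨a, b, ha, hb, hab, hu⟩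
    apply key
    intro y hy
    rw [he] at hy
    have h1 := hp y hy.1
    have h2 := hq y hy.1
    have h3 := hy.2
    rw [← hu, dotp_comm, ← dotl_apply, map_add, map_smul, map_smul, dotl_apply, dotl_apply,
      dotp_comm y p, dotp_comm y q, smul_eq_mul, smul_eq_mul] at h3
    by_contra hne
    have : dotp p y < 1 := lt_of_le_of_ne h1 hne
    nlinarith
  rw [hPV] at hext
  exact hV u (extremePoints_convexHull_subset hext)

theorem facet_isExtreme {d : ℕ} {P F : Set (Fin d → ℝ)} {u : Fin d → ℝ}
    (hF : IsFacetNormal P F u) : IsExtreme ℝ P F := by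
  obtain ⟨hne, hle, he, hr⟩ := hF
  refine ⟨?_, ?_⟩
  · rw [he]
    exact fun y hy => hy.1
  · rintro p hp q hq y hy ⟨a, b, ha, hb, hab, hu⟩
    rw [he] at hy ⊢
    refine ⟨hp, ?_⟩
    have h1 := hle p hp
    have h2 := hle q hq
    have h3 := hy.2
    rw [← hu, ← dotl_apply, map_add, map_smul, map_smul, dotl_apply, dotl_apply,
      smul_eq_mul, smul_eq_mul] at h3
    by_contra hne
    have : dotp u p < 1 := lt_of_le_of_ne h1 hne
    nlinarith

theorem exists_neg_smul_mem {d : ℕ} {P : Set (Fin d → ℝ)} (h0 : (0 : Fin d → ℝ) ∈ interior P)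
    (w : Fin d → ℝ) : ∃ t : ℝ, 0 < t ∧ t • w ∈ P ∧ (-t) • w ∈ P := by
  have hn : P ∈ nhds (0 : Fin d → ℝ) := mem_interior_iff_mem_nhds.1 h0
  have c1 : Filter.Tendsto (fun t : ℝ => t • w) (nhds 0) (nhds 0) := by
    have : Continuous (fun t : ℝ => t • w) := by fun_prop
    simpa using this.tendsto 0
  have c2 : Filter.Tendsto (fun t : ℝ => (-t) • w) (nhds 0) (nhds 0) := by
    have : Continuous (fun t : ℝ => (-t) • w) := by fun_prop
    simpa using this.tendsto 0
  have e := ((c1.eventually hn).and (c2.eventually hn)).filter_mono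
    (nhdsWithin_le_nhds (s := Set.Ioi 0))
  obtain ⟨t, ht, ht0⟩ := (e.and self_mem_nhdsWithin).exists
  exact ⟨t, ht0, ht.1, ht.2⟩

theorem facet_basis {d : ℕ} {P F : Set (Fin d → ℝ)} {u : Fin d → ℝ}
    (hP : IsReflexive P) (hs : IsSimplicial P) (hF : IsFacetNormal P F u) :
    F = convexHull ℝ (Set.extremePoints ℝ F) ∧ (Set.extremePoints ℝ F).Finite ∧
    ∃ b : Module.Basis (Set.extremePoints ℝ F) ℝ (Fin d → ℝ), ∀ e, b e = e := by
  have hsp := facet_span hF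
  have hcard := hs F ⟨u, hF⟩
  obtain ⟨hne, hle, he, hr⟩ := hF
  have hd : d ≠ 0 := by
    rintro rfl
    obtain ⟨y, hy⟩ := hne
    rw [he] at hy
    have := hy.2
    simp [dotp] at this
  have hfin : (Set.extremePoints ℝ F).Finite := by
    apply Set.finite_of_ncard_ne_zero
    omega
  obtain ⟨⟨V, hV, hPV⟩, -, -⟩ := hP
  have hPc : IsCompact P := by
    rw [hPV]
    exact V.finite_toSet.isCompact_convexHull ℝ
  have hPconv : Convex ℝ P := by
    rw [hPV]
    exact convex_convexHull ℝ _
  have hcont : Continuous (dotp u) := by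
    unfold dotp
    fun_prop
  have hFc : IsCompact F := by
    rw [he]
    exact hPc.inter_right (isClosed_eq hcont continuous_const)
  have hFconv : Convex ℝ F := by
    rw [he]
    exact hPconv.inter (convex_hyperplane (dotl u).isLinear 1)
  have hhull : F = convexHull ℝ (Set.extremePoints ℝ F) := by
    have := closure_convexHull_extremePoints hFc hFconv
    rw [(hfin.isClosed_convexHull ℝ).closure_eq] at this
    exact this.symm
  refine ⟨hhull, hfin, ?_⟩
  have hspE : (⊤ : Submodule ℝ (Fin d → ℝ)) ≤
      Submodule.span ℝ (Set.range (Subtype.val : Set.extremePoints ℝ F → (Fin d → ℝ))) := by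
    rw [Subtype.range_coe, ← hsp, Submodule.span_le]
    intro y hy
    rw [hhull] at hy
    exact convexHull_min Submodule.subset_span (Submodule.convex _) hy
  haveI := hfin.fintype
  have hc : Fintype.card (Set.extremePoints ℝ F) = Module.finrank ℝ (Fin d → ℝ) := by
    rw [← Nat.card_eq_fintype_card, Nat.card_coe_set_eq, hcard]
    simp
  exact ⟨basisOfTopLeSpanOfCardEqFinrank _ hspE hc, fun e => by simp⟩

theorem exists_nbr {d : ℕ} {P F : Set (Fin d → ℝ)} {u : Fin d → ℝ}
    (hP : IsReflexive P) (hF : IsFacetNormal P F u)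
    (hhull : F = convexHull ℝ (Set.extremePoints ℝ F))
    (b : Module.Basis (Set.extremePoints ℝ F) ℝ (Fin d → ℝ)) (hb : ∀ e, b e = e)
    (w : Set.extremePoints ℝ F) :
    ∃ F' u', ∃ t : ℝ, 0 < t ∧ IsFacetNormal P F' u' ∧ NbrFacet P F w F' ∧
      ∀ y, dotp u' y = dotp u y - t * b.coord w y := by
  classical
  have hFX := hF
  obtain ⟨hne, hle, he, hr⟩ := hF
  obtain ⟨⟨V, hV, hPV⟩, h0, -⟩ := hP
  have hVP : ∀ v ∈ V, v ∈ P := fun v hv => by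
    rw [hPV]
    exact subset_convexHull ℝ _ hv
  have hEF : ∀ e ∈ Set.extremePoints ℝ F, e ∈ F := fun e h => h.1
  have hFP : ∀ e ∈ F, e ∈ P ∧ dotp u e = 1 := fun e h => by
    rw [he] at h
    exact h
  have hcw : b.coord w w = 1 := by
    conv_lhs => rw [← hb w]
    simp
  have hcne : ∀ e : Set.extremePoints ℝ F, e ≠ w → b.coord w e = 0 := by
    intro e hne
    conv_lhs => rw [← hb e]
    simp [hne]
  have hFnn : ∀ y ∈ F, 0 ≤ b.coord w y := by
    intro y hy
    rw [hhull] at hy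
    have : convexHull ℝ (Set.extremePoints ℝ F) ⊆ {y | 0 ≤ b.coord w y} := by
      apply convexHull_min
      · intro e hE
        by_cases h : (⟨e, hE⟩ : Set.extremePoints ℝ F) = w
        · subst h
          exact le_of_le_of_eq zero_le_one hcw.symm
        · exact (hcne ⟨e, hE⟩ h).symm.le
      · exact convex_halfSpace_ge (b.coord w).isLinear 0
    exact this hy
  have hneg : (V.filter (fun v => b.coord w v < 0)).Nonempty := by
    by_contra hcon
    rw [Finset.not_nonempty_iff_eq_empty, Finset.filter_eq_empty_iff] at hcon
    have : P ⊆ {y | 0 ≤ b.coord w y} := by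
      rw [hPV]
      apply convexHull_min
      · intro v hv
        exact not_lt.1 (hcon hv)
      · exact convex_halfSpace_ge (b.coord w).isLinear 0
    obtain ⟨t, ht, -, h2⟩ := exists_neg_smul_mem h0 (w : Fin d → ℝ)
    have := this h2
    rw [Set.mem_setOf_eq, map_smul, hcw, smul_eq_mul] at this
    linarith
  obtain ⟨v, hv, hmin⟩ := Finset.exists_min_image _
    (fun v => (1 - dotp u v) / (-(b.coord w v))) hneg
  rw [Finset.mem_filter] at hv
  obtain ⟨hvV, hvneg⟩ := hv
  have hvF : v ∉ F := fun h => by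
    have := hFnn v h
    linarith
  have hv1 : dotp u v < 1 := by
    refine lt_of_le_of_ne (hle v (hVP v hvV)) fun h => hvF ?_
    rw [he]
    exact ⟨hVP v hvV, h⟩
  set t := (1 - dotp u v) / (-(b.coord w v)) with ht
  have htpos : 0 < t := div_pos (by linarith) (by linarith)
  have htv : t * (b.coord w v) = dotp u v - 1 := by
    have : b.coord w v ≠ 0 := hvneg.ne
    rw [ht]
    field_simp
    ring
  let u' : Fin d → ℝ := fun i => u i - t * b.coord w (Pi.single i 1)
  have hu' : ∀ y, dotp u' y = dotp u y - t * b.coord w y := by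
    intro y
    have h : dotl u' = dotl u - t • b.coord w := by
      apply LinearMap.pi_ext'
      intro i
      ext
      simp [dotl_apply, dotp, u', Pi.single_apply]
    have := LinearMap.congr_fun h y
    simpa [dotl_apply] using this
  have hle' : ∀ y ∈ P, dotp u' y ≤ 1 := by
    have : P ⊆ {y | dotl u' y ≤ 1} := by
      rw [hPV]
      apply convexHull_min
      · intro y hy
        rw [Set.mem_setOf_eq, dotl_apply, hu']
        have h1 := hle y (hVP y hy)
        by_cases hn : b.coord w y < 0
        · have h2 := hmin y (Finset.mem_filter.2 ⟨hy, hn⟩)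
          rw [le_div_iff₀ (by linarith)] at h2
          linarith
        · have := mul_nonneg htpos.le (not_lt.1 hn)
          linarith
      · exact convex_halfSpace_le (dotl u').isLinear 1
    exact this
  have hvF' : v ∈ {y ∈ P | dotp u' y = 1} := ⟨hVP v hvV, by rw [hu', htv]; ring⟩
  have heF' : ∀ e : Set.extremePoints ℝ F, e ≠ w → (e : Fin d → ℝ) ∈ {y ∈ P | dotp u' y = 1} := by
    intro e hew
    have := hFP e (hEF e e.2)
    refine ⟨this.1, ?_⟩
    rw [hu', hcne e hew, this.2]
    ring
  have hspan : Submodule.span ℝ {y ∈ P | dotp u' y = 1} = ⊤ := by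
    haveI : Fintype (Set.extremePoints ℝ F) := FiniteDimensional.fintypeBasisIndex b
    have hes : ∀ e : Set.extremePoints ℝ F, e ≠ w →
        b e ∈ Submodule.span ℝ {y ∈ P | dotp u' y = 1} := fun e hew => by
      rw [hb]
      exact Submodule.subset_span (heF' e hew)
    have hw : b w ∈ Submodule.span ℝ {y ∈ P | dotp u' y = 1} := by
      have h1 := b.sum_repr v
      rw [← Finset.add_sum_erase _ _ (Finset.mem_univ w)] at h1
      have h2 : b.repr v w • b w ∈ Submodule.span ℝ {y ∈ P | dotp u' y = 1} := by
        rw [eq_sub_of_add_eq h1]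
        refine Submodule.sub_mem _ (Submodule.subset_span hvF') (Submodule.sum_mem _ ?_)
        intro e hee
        exact Submodule.smul_mem _ _ (hes e (Finset.ne_of_mem_erase hee))
      exact (Submodule.smul_mem_iff _ (show b.repr v w ≠ 0 from hvneg.ne)).1 h2
    rw [eq_top_iff, ← b.span_eq, Submodule.span_le]
    rintro _ ⟨e, rfl⟩
    by_cases hew : e = w
    · rw [hew]
      exact hw
    · exact hes e hew
  have hFN : IsFacetNormal P {y ∈ P | dotp u' y = 1} u' := by
    refine ⟨⟨v, hvF'⟩, hle', rfl, ?_⟩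
    have := finrank_span_eq u' {y ∈ P | dotp u' y = 1} ⟨v, hvF'⟩ (fun y hy => hy.2)
    rw [hspan] at this
    simp at this
    omega
  refine ⟨{y ∈ P | dotp u' y = 1}, u', t, htpos, hFN, ⟨⟨u', hFN⟩, ?_, ?_⟩, hu'⟩
  · intro h
    rw [h] at hvF'
    exact hvF hvF'
  · rintro e ⟨hE, hew⟩
    exact heF' ⟨e, hE⟩ (fun h => hew (by simp [← h]))

theorem dotp_int {d : ℕ} {x y : Fin d → ℝ} (hx : IsLP x) (hy : IsLP y) :
    ∃ n : ℤ, dotp x y = n := by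
  choose f hf using hx
  choose g hg using hy
  exact ⟨∑ i, f i * g i, by simp [dotp, hf, hg]⟩

/-- (a) every lattice point of `∂P` on the hyperplane `H(F,0)` lies on a
neighboring facet of `F`; (b) every vertex in `H_P(F,0)` is a neighboring vertex of `F`;
consequently `|H_P(F,0)| ≤ d`. -/
theorem stmt10 {d : ℕ} (P : Set (Fin d → ℝ)) (hP : IsReflexive P) (hs : IsSimplicial P)
    (F : Set (Fin d → ℝ)) (u : Fin d → ℝ) (hF : IsFacetNormal P F u) :
    (∀ x : Fin d → ℝ, IsLP x → x ∈ frontier P → dotp u x = 0 →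
      ∃ w ∈ Set.extremePoints ℝ F, ∃ F', NbrFacet P F w F' ∧ x ∈ F') ∧
    (∀ v ∈ Set.extremePoints ℝ P, dotp u v = 0 →
      ∃ w ∈ Set.extremePoints ℝ F, NbrVertex P F w v) ∧
    {v ∈ Set.extremePoints ℝ P | dotp u v = 0}.ncard ≤ d := by
  classical
  obtain ⟨hhull, hfin, b, hb⟩ := facet_basis hP hs hF
  choose N u' t ht hN hNb hdot using exists_nbr hP hF hhull b hb
  have hPX := hP
  obtain ⟨⟨V, hV, hPV⟩, h0, hdual⟩ := hP
  have hFX := hF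
  obtain ⟨hne, hle, he, hr⟩ := hF
  have hEu : ∀ e : Set.extremePoints ℝ F, dotp u e = 1 := fun e => by
    have h : (e : Fin d → ℝ) ∈ F := e.2.1
    exact (he.subset h).2
  haveI := hfin.fintype
  have key : ∀ x : Fin d → ℝ, IsLP x → x ∈ P → x ≠ 0 → dotp u x = 0 → ∃ w, x ∈ N w := by
    intro x hx hxP hx0 hux
    have hsum : ∑ e, b.repr x e = 0 := by
      have h1 := congrArg (dotl u) (b.sum_repr x)
      rw [dotl_apply u x, hux, map_sum] at h1
      rw [← h1]
      refine Finset.sum_congr rfl fun e _ => ?_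
      rw [map_smul, hb, dotl_apply, hEu, smul_eq_mul, mul_one]
    have hex : ∃ w, b.repr x w < 0 := by
      by_contra hcon
      push Not at hcon
      rw [Finset.sum_eq_zero_iff_of_nonneg (fun e _ => hcon e)] at hsum
      apply hx0
      rw [← b.sum_repr x]
      exact Finset.sum_eq_zero fun e he => by rw [hsum e he, zero_smul]
    obtain ⟨w, hw⟩ := hex
    refine ⟨w, ?_⟩
    obtain ⟨n, hn⟩ := dotp_int (facet_normal_lattice hdual (hN w)) hx
    have h1 := (hN w).2.1 x hxP
    have h2 : 0 < dotp (u' w) x := by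
      rw [hdot, hux, Module.Basis.coord_apply]
      have := mul_pos_of_neg_of_neg (neg_lt_zero.2 (ht w)) hw
      linarith
    rw [hn] at h1 h2
    have h1' : n ≤ 1 := by exact_mod_cast h1
    have h2' : 0 < n := by exact_mod_cast h2
    have h3 : n = 1 := by omega
    rw [(hN w).2.2.1]
    exact ⟨hxP, by rw [hn, h3]; simp⟩
  have hvert : ∀ v ∈ Set.extremePoints ℝ P, dotp u v = 0 → ∃ w, v ∈ N w := by
    intro v hv huv
    refine key v ?_ hv.1 ?_ huv
    · rw [hPV] at hv
      exact hV v (extremePoints_convexHull_subset hv)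
    · rintro rfl
      obtain ⟨f, hf⟩ := hne
      obtain ⟨s, hs0, h1, h2⟩ := exists_neg_smul_mem h0 f
      have h3 := (mem_extremePoints_iff_left.1 hv).2 _ h1 _ h2
        ⟨1/2, 1/2, by norm_num, by norm_num, by norm_num, by simp⟩
      have hf0 : f = 0 := (smul_eq_zero.1 h3).resolve_left hs0.ne'
      rw [he, hf0] at hf
      have := hf.2
      simp [dotp] at this
  have hnF : ∀ v, dotp u v = 0 → v ∉ F := by
    intro v hv hvF
    rw [he] at hvF
    have := hvF.2
    rw [hv] at this
    exact zero_ne_one this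
  have hext : ∀ w, ∀ v ∈ Set.extremePoints ℝ P, v ∈ N w → v ∈ Set.extremePoints ℝ (N w) := by
    intro w v hv hvN
    exact inter_extremePoints_subset_extremePoints_of_subset (facet_isExtreme (hN w)).1 ⟨hvN, hv⟩
  refine ⟨?_, ?_, ?_⟩
  · intro x hx hfr hux
    have hcl : IsClosed P := by
      rw [hPV]
      exact V.finite_toSet.isClosed_convexHull ℝ
    obtain ⟨w, hw⟩ := key x hx (hcl.frontier_subset hfr) (by
      rintro rfl
      exact hfr.2 h0) hux
    exact ⟨w, w.2, N w, hNb w, hw⟩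
  · intro v hv huv
    obtain ⟨w, hw⟩ := hvert v hv huv
    exact ⟨w, w.2, N w, hNb w, hext w v hv hw, hnF v huv⟩
  · have hcard := hs F ⟨u, hFX⟩
    have hch : ∀ v : {v ∈ Set.extremePoints ℝ P | dotp u v = 0}, ∃ w, v.1 ∈ N w :=
      fun v => hvert v.1 v.2.1 v.2.2
    choose g hg using hch
    have hinj : Function.Injective g := by
      intro v v' hvv
      by_contra hne'
      have hNc := hs (N (g v)) (hNb (g v)).1
      have hd : d ≠ 0 := by
        rintro rfl
        have := hEu (g v)
        simp [dotp] at this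
      have hNfin : (Set.extremePoints ℝ (N (g v))).Finite :=
        Set.finite_of_ncard_ne_zero (by omega)
      have hsub : insert v.1 (insert v'.1 (Set.extremePoints ℝ F \ {(g v).1})) ⊆
          Set.extremePoints ℝ (N (g v)) := by
        rintro y (rfl | rfl | hy)
        · exact hext _ _ v.2.1 (hg v)
        · exact hext _ _ v'.2.1 (by rw [hvv]; exact hg v')
        · refine hext _ _ ?_ ((hNb (g v)).2.2 hy)
          exact (facet_isExtreme hFX).extremePoints_subset_extremePoints hy.1
      have hle' := Set.ncard_le_ncard hsub hNfin
      have hfd : (Set.extremePoints ℝ F \ {(g v).1}).Finite := hfin.subset Set.diff_subset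
      rw [Set.ncard_insert_of_notMem _ (hfd.insert _), Set.ncard_insert_of_notMem _ hfd,
        Set.ncard_diff_singleton_of_mem (g v).2] at hle'
      · omega
      · exact fun h => hnF v'.1 v'.2.2 h.1.1
      · rintro (h | h)
        · exact hne' (Subtype.ext h)
        · exact hnF v.1 v.2.2 h.1.1
    have := Nat.card_le_card_of_injective g hinj
    rw [Nat.card_coe_set_eq, Nat.card_coe_set_eq, hcard] at this
    exact this
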